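/- Let v1, v2, v3, v4 (listed counterclockwise) be the vertices of a convex quadrilateral Q = conv{v1, v2, v3, v4} in ℝ², let mij be the midpoint of vi and vj, and let c = (v1 + v2 + v3 + v4)/4. Then each of the four subquadrilaterals of the red refinement of Q, namely conv{v1, m12, c, m41}, conv{m12, v2, m23, c}, conv{c, m23, v3, m34}, and conv{m41, c, m34, v4}, is again a convex quadrilateral with nonempty interior: its four listed vertices are in convex position with no three of them collinear. -/

import Mathlib

noncomputable section

/-- The Euclidean plane. -/
abbrev E2 : Type := EuclideanSpace ℝ (Fin 2)

/-- The points `a`, `b`, `c` are in counterclockwise order (positively oriented). -/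
def Ccw (a b c : E2) : Prop :=
  0 < (b 0 - a 0) * (c 1 - a 1) - (b 1 - a 1) * (c 0 - a 0)

/-- The (listed) points `a, b, c, d` are the vertices of a convex quadrilateral: they are
in convex position, with no three of them collinear. -/
def ConvexQuad (a b c d : E2) : Prop :=
  (¬ Collinear ℝ ({a, b, c} : Set E2) ∧ ¬ Collinear ℝ ({a, b, d} : Set E2) ∧
    ¬ Collinear ℝ ({a, c, d} : Set E2) ∧ ¬ Collinear ℝ ({b, c, d} : Set E2)) ∧
  (a ∉ convexHull ℝ ({b, c, d} : Set E2) ∧ b ∉ convexHull ℝ ({a, c, d} : Set E2) ∧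
    c ∉ convexHull ℝ ({a, b, d} : Set E2) ∧ d ∉ convexHull ℝ ({a, b, c} : Set E2))

theorem Ccw.rot {a b c : E2} (h : Ccw a b c) : Ccw b c a := by
  unfold Ccw at *; linarith

theorem Ccw.not_collinear {a b c : E2} (h : Ccw a b c) :
    ¬ Collinear ℝ ({a, b, c} : Set E2) := by
  intro hc
  rw [collinear_iff_of_mem (p₀ := a) (by simp)] at hc
  obtain ⟨v, hv⟩ := hc
  obtain ⟨r, hr⟩ := hv b (by simp)
  obtain ⟨s, hs⟩ := hv c (by simp)
  subst hr hs
  simp [Ccw] at h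
  linarith

theorem Ccw.not_mem {a b c d : E2} (h1 : Ccw b c d) (h2 : Ccw d a b) :
    a ∉ convexHull ℝ ({b, c, d} : Set E2) := by
  intro ha
  have hconv : Convex ℝ {x : E2 |
      0 ≤ (b 0 - d 0) * (x 1 - d 1) - (b 1 - d 1) * (x 0 - d 0)} := by
    intro x hx y hy s t hs ht hst
    simp only [Set.mem_setOf_eq, PiLp.add_apply, PiLp.smul_apply, smul_eq_mul] at *
    have e : s = 1 - t := by linarith
    have h := add_nonneg (mul_nonneg hs hx) (mul_nonneg ht hy)
    subst e
    linarith
  have hsub : ({b, c, d} : Set E2) ⊆ {x : E2 |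
      0 ≤ (b 0 - d 0) * (x 1 - d 1) - (b 1 - d 1) * (x 0 - d 0)} := by
    unfold Ccw at h1
    rintro x (rfl | rfl | rfl) <;> simp only [Set.mem_setOf_eq] <;> linarith
  have := convexHull_min hsub hconv ha
  unfold Ccw at h2
  simp only [Set.mem_setOf_eq] at this
  linarith

theorem interior_nonempty_of_ccw {a b c d : E2} (h : Ccw a b c) :
    (interior (convexHull ℝ ({a, b, c, d} : Set E2))).Nonempty := by
  have hi := affineIndependent_iff_not_collinear_set.2 h.not_collinear
  have ht := hi.affineSpan_eq_top_iff_card_eq_finrank_add_one.2 (by simp)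
  rw [interior_convexHull_nonempty_iff_affineSpan_eq_top, eq_top_iff, ← ht]
  apply affineSpan_mono
  rintro x ⟨i, rfl⟩
  fin_cases i <;> simp

theorem quad_of_ccw {a b c d : E2} (h1 : Ccw a b c) (h2 : Ccw b c d) (h3 : Ccw c d a)
    (h4 : Ccw d a b) : ConvexQuad a b c d ∧
      (interior (convexHull ℝ ({a, b, c, d} : Set E2))).Nonempty := by
  refine ⟨⟨⟨h1.not_collinear, h4.rot.not_collinear, h3.rot.rot.not_collinear,
    h2.not_collinear⟩, h2.not_mem h4, ?_, ?_, h1.not_mem h3⟩, interior_nonempty_of_ccw h1⟩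
  · have e : ({a, c, d} : Set E2) = {c, d, a} := by ext x; simp; tauto
    rw [e]; exact h3.not_mem h1
  · have e : ({a, b, d} : Set E2) = {d, a, b} := by ext x; simp; tauto
    rw [e]; exact h4.not_mem h2

theorem midpoint_coord (a b : E2) (i : Fin 2) : midpoint ℝ a b i = (a i + b i) / 2 := by
  rw [midpoint_eq_smul_add]; simp; ring

/-- Each of the four subquadrilaterals of the red refinement of a convex quadrilateral
with counterclockwise-listed vertices `v1, v2, v3, v4` is again a convex quadrilateral
with nonempty interior. -/
theorem stmt8 (v1 v2 v3 v4 m12 m23 m34 m41 c : E2)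
    (hquad : ConvexQuad v1 v2 v3 v4)
    (hccw : Ccw v1 v2 v3 ∧ Ccw v2 v3 v4 ∧ Ccw v3 v4 v1 ∧ Ccw v4 v1 v2)
    (hm12 : m12 = midpoint ℝ v1 v2) (hm23 : m23 = midpoint ℝ v2 v3)
    (hm34 : m34 = midpoint ℝ v3 v4) (hm41 : m41 = midpoint ℝ v4 v1)
    (hc : c = (4 : ℝ)⁻¹ • (v1 + v2 + v3 + v4)) :
    (ConvexQuad v1 m12 c m41 ∧
      (interior (convexHull ℝ ({v1, m12, c, m41} : Set E2))).Nonempty) ∧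
    (ConvexQuad m12 v2 m23 c ∧
      (interior (convexHull ℝ ({m12, v2, m23, c} : Set E2))).Nonempty) ∧
    (ConvexQuad c m23 v3 m34 ∧
      (interior (convexHull ℝ ({c, m23, v3, m34} : Set E2))).Nonempty) ∧
    (ConvexQuad m41 c m34 v4 ∧
      (interior (convexHull ℝ ({m41, c, m34, v4} : Set E2))).Nonempty) := by
  obtain ⟨h1, h2, h3, h4⟩ := hccw
  unfold Ccw at h1 h2 h3 h4
  subst hm12 hm23 hm34 hm41 hc
  refine ⟨quad_of_ccw ?_ ?_ ?_ ?_, quad_of_ccw ?_ ?_ ?_ ?_, quad_of_ccw ?_ ?_ ?_ ?_,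
    quad_of_ccw ?_ ?_ ?_ ?_⟩ <;>
  · simp only [Ccw, midpoint_coord, PiLp.add_apply, PiLp.smul_apply, smul_eq_mul]
    linarith
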